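/- (Poincaré-type inequality) Let Ω ⊂ ℝⁿ be a bounded open set with interaction domain Ω_I of positive measure, Ω̃ = Ω ∪ Ω_I, and let V_c(Ω̃) = {u ∈ V(Ω̃) : u = 0 a.e. on Ω_I}, where |||·||| is the nonlocal energy seminorm defined by γ as above. Suppose the embedding H^{β(·)}(Ω̃) ↪ L²(Ω̃) is compact and |||u||| = 0 with u|_{Ω_I} = 0 implies u = 0. Then there exists C > 0 such that ‖u‖²_{L²(Ω̃)} ≤ C |||u|||² for all u ∈ V_c(Ω̃). -/

import Mathlib

open MeasureTheory Set
open scoped ENNReal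
noncomputable section

abbrev Euc (n : ℕ) := EuclideanSpace ℝ (Fin n)

/-- Quadratic form ξ · A · ξ. -/
def quadForm (n : ℕ) (A : Matrix (Fin n) (Fin n) ℝ) (ξ : Euc n) : ℝ :=
  ∑ i, ∑ j, A i j * ξ i * ξ j

/-- The kernel γ(t,x,y) = ((y−x)·a(t,x,y)·(y−x))/|y−x|^{n+2β(x)+2} 1_{B_ε(x)}(y). -/
def gammaKer (n : ℕ) (β : Euc n → ℝ) (ε : ℝ)
    (a : ℝ → Euc n → Euc n → Matrix (Fin n) (Fin n) ℝ) (t : ℝ) (x y : Euc n) : ℝ :=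
  (Metric.closedBall x ε).indicator
    (fun y => quadForm n (a t x y) (y - x) / dist y x ^ ((n : ℝ) + 2 * β x + 2)) y

/-- The nonlocal energy seminorm squared |||u|||². -/
def energySq (n : ℕ) (Ω : Set (Euc n)) (β : Euc n → ℝ) (ε : ℝ)
    (a : ℝ → Euc n → Euc n → Matrix (Fin n) (Fin n) ℝ) (t : ℝ) (u : Euc n → ℝ) : ℝ≥0∞ :=
  (1 / 2 : ℝ≥0∞) * ∫⁻ x in Ω, ∫⁻ y in Ω,
    ENNReal.ofReal ((u y - u x) ^ 2 * gammaKer n β ε a t x y)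

/-- Variable-order Gagliardo seminorm squared. -/
def gagVarSq (n : ℕ) (Ω : Set (Euc n)) (p : Euc n → ℝ) (u : Euc n → ℝ) : ℝ≥0∞ :=
  ∫⁻ x in Ω, ∫⁻ y in Ω,
    ENNReal.ofReal ((u y - u x) ^ 2 / dist y x ^ ((n : ℝ) + 2 * p x))

/-- Squared L² norm. -/
def l2Sq (n : ℕ) (Ω : Set (Euc n)) (u : Euc n → ℝ) : ℝ≥0∞ :=
  ∫⁻ x in Ω, ENNReal.ofReal ((u x) ^ 2)

/-- Sobolev norm. -/
def sobNorm (n : ℕ) (Ω : Set (Euc n)) (p : Euc n → ℝ) (u : Euc n → ℝ) : ℝ≥0∞ :=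
  l2Sq n Ω u ^ (1/2 : ℝ) + gagVarSq n Ω p u ^ (1/2 : ℝ)

/-- Compactness of the embedding into L²(Ω). -/
def CompactEmbL2 (n : ℕ) (Ω : Set (Euc n)) (N : (Euc n → ℝ) → ℝ≥0∞) : Prop :=
  ∀ (u : ℕ → Euc n → ℝ) (M : ℝ≥0∞), (∀ k, Measurable (u k)) → M ≠ ⊤ →
    (∀ k, N (u k) ≤ M) →
    ∃ (φ : ℕ → ℕ) (v : Euc n → ℝ), StrictMono φ ∧
      Filter.Tendsto (fun k => l2Sq n Ω (fun x => u (φ k) x - v x))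
        Filter.atTop (nhds 0)

/-- Truncated unweighted energy. -/
def truncD (n : ℕ) (μ : Measure (Euc n)) (ε : ℝ) (u : Euc n → ℝ) : ℝ≥0∞ :=
  ∫⁻ x, ∫⁻ y, (Metric.closedBall x ε).indicator
    (fun y => ENNReal.ofReal ((u y - u x) ^ 2)) y ∂μ ∂μ

/-- Sets on which the Poincaré inequality holds. -/
def GoodSet (n : ℕ) (μ : Measure (Euc n)) (ε : ℝ) (I : Set (Euc n)) (E : Set (Euc n)) : Prop :=
  ∃ C : ℝ≥0∞, C ≠ ⊤ ∧ ∀ u : Euc n → ℝ, Measurable u →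
    (∀ᵐ x ∂volume.restrict I, u x = 0) →
    ∫⁻ x in E, ENNReal.ofReal ((u x) ^ 2) ∂μ ≤ C * truncD n μ ε u

lemma GoodSet.union {n : ℕ} {μ : Measure (Euc n)} {ε : ℝ} {I E F : Set (Euc n)}
    (hE : GoodSet n μ ε I E) (hF : GoodSet n μ ε I F) : GoodSet n μ ε I (E ∪ F) := by
  obtain ⟨C, hC, h⟩ := hE
  obtain ⟨C', hC', h'⟩ := hF
  refine ⟨C + C', by simp [hC, hC'], fun u hu h0 => ?_⟩
  rw [add_mul]
  exact (lintegral_union_le _ _ _).trans (add_le_add (h u hu h0) (h' u hu h0))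

lemma GoodSet.step {n : ℕ} {μ : Measure (Euc n)} {ε : ℝ} {I G F : Set (Euc n)}
    (hG : GoodSet n μ ε I G) (hF : MeasurableSet F)
    (hGm : MeasurableSet G)
    (hFfin : μ F ≠ ⊤) {δ : ℝ≥0∞} (hδ : δ ≠ 0) (hδ' : δ ≠ ⊤)
    (hm : ∀ x ∈ F, δ ≤ μ (G ∩ Metric.closedBall x ε)) : GoodSet n μ ε I F := by
  obtain ⟨C, hC, h⟩ := hG
  refine ⟨δ⁻¹ * (2 + 2 * (μ F * C)), by finiteness, fun u hu h0 => ?_⟩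
  have h1 : δ * ∫⁻ x in F, ENNReal.ofReal ((u x) ^ 2) ∂μ
      ≤ 2 * truncD n μ ε u + 2 * (μ F * (C * truncD n μ ε u)) := by
    rw [← lintegral_const_mul' _ _ hδ']
    calc ∫⁻ x in F, δ * ENNReal.ofReal ((u x) ^ 2) ∂μ
        ≤ ∫⁻ x in F, ((2 * ∫⁻ y, (Metric.closedBall x ε).indicator
            (fun y => ENNReal.ofReal ((u y - u x) ^ 2)) y ∂μ) + 2 * (C * truncD n μ ε u)) ∂μ := by
          refine setLIntegral_mono' hF fun x hx => ?_
          calc δ * ENNReal.ofReal ((u x) ^ 2)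
              ≤ μ (G ∩ Metric.closedBall x ε) * ENNReal.ofReal ((u x) ^ 2) := by
                gcongr; exact hm x hx
            _ = ∫⁻ y in G ∩ Metric.closedBall x ε, ENNReal.ofReal ((u x) ^ 2) ∂μ := by
                rw [setLIntegral_const, mul_comm]
            _ ≤ ∫⁻ y in G ∩ Metric.closedBall x ε, (2 * (Metric.closedBall x ε).indicator
                  (fun y => ENNReal.ofReal ((u y - u x) ^ 2)) y
                  + 2 * ENNReal.ofReal ((u y) ^ 2)) ∂μ := by
                refine setLIntegral_mono' (hGm.inter Metric.isClosed_closedBall.measurableSet)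
                  fun y hy => ?_
                rw [indicator_of_mem hy.2]
                have e2 : (2 : ℝ≥0∞) = ENNReal.ofReal 2 := by simp
                rw [e2, ← ENNReal.ofReal_mul (by norm_num), ← ENNReal.ofReal_mul (by norm_num),
                  ← ENNReal.ofReal_add (by positivity) (by positivity)]
                apply ENNReal.ofReal_le_ofReal
                nlinarith [sq_nonneg (u x - 2 * u y)]
            _ = (∫⁻ y in G ∩ Metric.closedBall x ε, 2 * (Metric.closedBall x ε).indicator
                  (fun y => ENNReal.ofReal ((u y - u x) ^ 2)) y ∂μ)
                + ∫⁻ y in G ∩ Metric.closedBall x ε, 2 * ENNReal.ofReal ((u y) ^ 2) ∂μ :=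
                lintegral_add_right _ (by fun_prop)
            _ ≤ _ := by
                rw [lintegral_const_mul' _ _ (by simp), lintegral_const_mul' _ _ (by simp)]
                gcongr
                · exact Measure.restrict_le_self
                · exact (lintegral_mono_set inter_subset_left).trans (h u hu h0)
      _ = 2 * (∫⁻ x in F, ∫⁻ y, (Metric.closedBall x ε).indicator
            (fun y => ENNReal.ofReal ((u y - u x) ^ 2)) y ∂μ ∂μ)
            + 2 * (C * truncD n μ ε u) * μ F := by
          rw [lintegral_add_right _ (by fun_prop), lintegral_const_mul' _ _ (by simp),
            setLIntegral_const]
      _ ≤ 2 * truncD n μ ε u + 2 * (C * truncD n μ ε u) * μ F := by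
          gcongr
          exact setLIntegral_le_lintegral _ _
      _ = _ := by ring
  calc ∫⁻ x in F, ENNReal.ofReal ((u x) ^ 2) ∂μ
      = δ⁻¹ * (δ * ∫⁻ x in F, ENNReal.ofReal ((u x) ^ 2) ∂μ) := by
        rw [← mul_assoc, ENNReal.inv_mul_cancel hδ hδ', one_mul]
    _ ≤ δ⁻¹ * (2 * truncD n μ ε u + 2 * (μ F * (C * truncD n μ ε u))) := by gcongr
    _ = _ := by ring

lemma kernel_lower (n : ℕ) (β : Euc n → ℝ) (hβ : ∀ x, 0 < β x ∧ β x < 1)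
    (ε : ℝ) (a : ℝ → Euc n → Euc n → Matrix (Fin n) (Fin n) ℝ)
    (alo : ℝ) (halo : 0 < alo)
    (hell : ∀ t x y (ξ : Euc n), alo * ‖ξ‖ ^ 2 ≤ quadForm n (a t x y) ξ)
    (t : ℝ) (x y : Euc n) (hxy : y ≠ x) (hy : y ∈ Metric.closedBall x ε) :
    alo / (max 1 ε) ^ ((n : ℝ) + 2) ≤ gammaKer n β ε a t x y := by
  rw [gammaKer, indicator_of_mem hy]
  have hd : 0 < dist y x := dist_pos.2 hxy
  have hd' : dist y x ≤ max 1 ε := (Metric.mem_closedBall.1 hy).trans (le_max_right _ _)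
  have hn : (0 : ℝ) ≤ n := Nat.cast_nonneg n
  have hR : 0 < (max 1 ε) ^ ((n : ℝ) + 2) :=
    Real.rpow_pos_of_pos (lt_of_lt_of_le one_pos (le_max_left _ _)) _
  have h1 : dist y x ^ ((n : ℝ) + 2 * β x) ≤ (max 1 ε) ^ ((n : ℝ) + 2) :=
    (Real.rpow_le_rpow hd.le hd' (by linarith [(hβ x).1])).trans
      (Real.rpow_le_rpow_of_exponent_le (le_max_left _ _) (by linarith [(hβ x).2]))
  have h2 := hell t x y (y - x)
  rw [← dist_eq_norm] at h2
  rw [Real.rpow_add hd, Real.rpow_two, div_le_div_iff₀ hR (by positivity)]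
  have h3 : 0 < dist y x ^ 2 := by positivity
  calc alo * (dist y x ^ ((n : ℝ) + 2 * β x) * dist y x ^ 2)
      ≤ alo * ((max 1 ε) ^ ((n : ℝ) + 2) * dist y x ^ 2) := by gcongr
    _ = (alo * dist y x ^ 2) * (max 1 ε) ^ ((n : ℝ) + 2) := by ring
    _ ≤ _ := by gcongr

lemma energy_lower (n : ℕ) (S : Set (Euc n)) (β : Euc n → ℝ) (hβ : ∀ x, 0 < β x ∧ β x < 1)
    (ε : ℝ) (a : ℝ → Euc n → Euc n → Matrix (Fin n) (Fin n) ℝ)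
    (alo : ℝ) (halo : 0 < alo)
    (hell : ∀ t x y (ξ : Euc n), alo * ‖ξ‖ ^ 2 ≤ quadForm n (a t x y) ξ)
    (t : ℝ) : ∃ K : ℝ≥0∞, K ≠ ⊤ ∧ ∀ u : Euc n → ℝ,
      truncD n (volume.restrict S) ε u ≤ K * energySq n S β ε a t u := by
  set c := alo / (max 1 ε) ^ ((n : ℝ) + 2) with hc
  have hc0 : 0 < c := div_pos halo
    (Real.rpow_pos_of_pos (lt_of_lt_of_le one_pos (le_max_left _ _)) _)
  refine ⟨ENNReal.ofReal c⁻¹ * 2, by finiteness, fun u => ?_⟩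
  rw [energySq, mul_assoc, ← mul_assoc 2, one_div,
    ENNReal.mul_inv_cancel (by simp) (by simp), one_mul, truncD,
    ← lintegral_const_mul' _ _ (by finiteness)]
  refine lintegral_mono fun x => ?_
  rw [← lintegral_const_mul' _ _ (by finiteness)]
  refine lintegral_mono fun y => ?_
  by_cases hy : y ∈ Metric.closedBall x ε
  · rw [indicator_of_mem hy, ← ENNReal.ofReal_mul (by positivity)]
    apply ENNReal.ofReal_le_ofReal
    by_cases hxy : y = x
    · simp [hxy]
    · have := kernel_lower n β hβ ε a alo halo hell t x y hxy hy
      rw [← hc] at this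
      rw [inv_mul_eq_div, le_div_iff₀ hc0]
      gcongr
  · rw [indicator_of_notMem hy]; exact zero_le

theorem stmt_6 (n : ℕ) (Ω ΩI : Set (Euc n))
    (hΩ : IsOpen Ω) (hbd : Bornology.IsBounded Ω) (hΩI : MeasurableSet ΩI)
    (hΩIpos : 0 < volume ΩI)
    (β : Euc n → ℝ) (βlo βhi : ℝ) (hlo : 0 < βlo) (hhi : βhi < 1)
    (hβ : ∀ x, βlo ≤ β x ∧ β x ≤ βhi) (hβcont : Continuous β)
    (ε : ℝ) (hε : 0 < ε)
    (a : ℝ → Euc n → Euc n → Matrix (Fin n) (Fin n) ℝ)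
    (alo ahi : ℝ) (halo : 0 < alo)
    (hsym : ∀ t x y, (a t x y).IsSymm)
    (hell : ∀ t x y (ξ : Euc n),
      alo * ‖ξ‖ ^ 2 ≤ quadForm n (a t x y) ξ ∧ quadForm n (a t x y) ξ ≤ ahi * ‖ξ‖ ^ 2)
    (t : ℝ)
    (hcomp : CompactEmbL2 n (Ω ∪ ΩI) (sobNorm n (Ω ∪ ΩI) β))
    (hker : ∀ u : Euc n → ℝ, Measurable u →
      energySq n (Ω ∪ ΩI) β ε a t u = 0 →
      (∀ᵐ x ∂volume.restrict ΩI, u x = 0) →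
      (∀ᵐ x ∂volume.restrict (Ω ∪ ΩI), u x = 0)) :
    ∃ C : ℝ≥0∞, 0 < C ∧ C ≠ ⊤ ∧
      ∀ u : Euc n → ℝ, Measurable u →
        l2Sq n (Ω ∪ ΩI) u ≠ ⊤ → energySq n (Ω ∪ ΩI) β ε a t u ≠ ⊤ →
        (∀ᵐ x ∂volume.restrict ΩI, u x = 0) →
        l2Sq n (Ω ∪ ΩI) u ≤ C * energySq n (Ω ∪ ΩI) β ε a t u := by
  classical
  have hβ' : ∀ x, 0 < β x ∧ β x < 1 := fun x =>
    ⟨lt_of_lt_of_le hlo (hβ x).1, lt_of_le_of_lt (hβ x).2 hhi⟩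
  set S := Ω ∪ ΩI with hS
  have hSm : MeasurableSet S := hΩ.measurableSet.union hΩI
  set μ := (volume : Measure (Euc n)).restrict S with hμ
  obtain ⟨K, hK, hKD⟩ := energy_lower n S β hβ' ε a alo halo
    (fun t x y ξ => (hell t x y ξ).1) t
  -- the finite cover
  have htb : TotallyBounded Ω :=
    hbd.isCompact_closure.totallyBounded.subset subset_closure
  obtain ⟨T, hTfin, hT⟩ := Metric.totallyBounded_iff.1 htb (ε / 2) (half_pos hε)
  let E : Euc n → Set (Euc n) := fun z => Metric.ball z (ε / 2)
  have hEm : ∀ z, MeasurableSet (E z) := fun z => Metric.isOpen_ball.measurableSet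
  have hEfin : ∀ z, μ (E z) ≠ ⊤ := fun z =>
    ((Measure.restrict_apply_le _ _).trans_lt measure_ball_lt_top).ne
  let T' : Finset (Euc n) := hTfin.toFinset.filter (fun z => GoodSet n μ ε ΩI (E z))
  let G : Set (Euc n) := ΩI ∪ ⋃ z ∈ T', E z
  have hGm : MeasurableSet G :=
    hΩI.union (Finset.measurableSet_biUnion _ fun z _ => hEm z)
  have hIgood : GoodSet n μ ε ΩI ΩI := by
    refine ⟨0, by simp, fun u hu h0 => ?_⟩
    have : μ.restrict ΩI = volume.restrict ΩI := by
      rw [hμ, Measure.restrict_restrict hΩI, inter_eq_left.2 subset_union_right]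
    rw [this, zero_mul]
    refine le_of_eq ((lintegral_congr_ae ?_).trans lintegral_zero)
    filter_upwards [h0] with x hx
    simp [hx]
  have hGgood : GoodSet n μ ε ΩI G := by
    refine hIgood.union ?_
    have : ∀ A : Finset (Euc n), (∀ z ∈ A, GoodSet n μ ε ΩI (E z)) →
        GoodSet n μ ε ΩI (⋃ z ∈ A, E z) := by
      intro A
      induction A using Finset.induction_on with
      | empty => exact fun _ => ⟨0, by simp, fun u _ _ => by simp⟩
      | insert b A _ ih =>
        intro h
        rw [Finset.set_biUnion_insert]
        exact (h b (by simp)).union (ih fun z hz => h z (by simp [hz]))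
    exact this _ fun z hz => (Finset.mem_filter.1 hz).2
  let m : Euc n → ℝ≥0∞ := fun x => μ (G ∩ Metric.closedBall x ε)
  have hNm : MeasurableSet {p : Euc n × Euc n | p.2 ∈ G ∧ dist p.2 p.1 ≤ ε} :=
    (measurable_snd hGm).inter
      (measurableSet_le (measurable_snd.dist measurable_fst) measurable_const)
  have hmm : Measurable m := measurable_measure_prodMk_left hNm
  -- a bad ball does not interact with G
  have hbad : ∀ z ∈ T, ¬ GoodSet n μ ε ΩI (E z) → ∀ᵐ x ∂μ, x ∈ E z → m x = 0 := by
    intro z hz hzb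
    have key : ∀ k : ℕ, ∀ᵐ x ∂μ, ¬ (x ∈ E z ∧ ((k : ℝ≥0∞) + 1)⁻¹ ≤ m x) := by
      intro k
      by_contra hcon
      apply hzb
      let F := E z ∩ {x | ((k : ℝ≥0∞) + 1)⁻¹ ≤ m x}
      have hFm : MeasurableSet F := (hEm z).inter (measurableSet_le measurable_const hmm)
      have hFpos : μ F ≠ 0 := by
        intro h
        apply hcon
        rw [ae_iff]
        refine measure_mono_null (fun x hx => ?_) h
        exact not_not.1 hx
      have hFfin : μ F ≠ ⊤ := ((measure_mono inter_subset_left).trans_lt (hEfin z).lt_top).ne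
      have hFgood : GoodSet n μ ε ΩI F :=
        hGgood.step hFm hGm hFfin (δ := ((k : ℝ≥0∞) + 1)⁻¹)
          (by simp) (by simp) fun x hx => hx.2
      refine hFgood.step (hEm z) hFm (hEfin z) hFpos hFfin fun x hx => ?_
      refine measure_mono fun y hy => ⟨hy, ?_⟩
      have h1 := Metric.mem_ball.1 hy.1
      have h2 := Metric.mem_ball.1 hx
      rw [Metric.mem_closedBall]
      linarith [dist_triangle_right y x z]
    filter_upwards [ae_all_iff.2 key] with x hx hxE
    by_contra h
    obtain ⟨k, hk⟩ := ENNReal.exists_inv_nat_lt h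
    exact hx k ⟨hxE, le_trans (ENNReal.inv_le_inv.2 (le_self_add)) hk.le⟩
  have hsep : ∀ᵐ x ∂μ, x ∉ G → m x = 0 := by
    have h1 : ∀ᵐ x ∂μ, ∀ z ∈ T, ¬ GoodSet n μ ε ΩI (E z) → x ∈ E z → m x = 0 := by
      rw [ae_ball_iff hTfin.countable]
      intro z hz
      by_cases h : GoodSet n μ ε ΩI (E z)
      · exact Filter.Eventually.of_forall fun x hx => absurd h hx
      · filter_upwards [hbad z hz h] with x hx _ using hx
    filter_upwards [h1, ae_restrict_mem hSm] with x hx hxS hxG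
    have hxΩ : x ∈ Ω := hxS.resolve_right fun h => hxG (Or.inl h)
    obtain ⟨z, hz, hxz⟩ := mem_iUnion₂.1 (hT hxΩ)
    refine hx z hz (fun hg => hxG (Or.inr ?_)) hxz
    exact mem_iUnion₂.2 ⟨z, Finset.mem_filter.2 ⟨hTfin.mem_toFinset.2 hz, hg⟩, hxz⟩
  have hsep1 : ∀ᵐ x ∂μ, ∀ᵐ y ∂μ, ¬ (x ∉ G ∧ (y ∈ G ∧ dist y x ≤ ε)) := by
    filter_upwards [hsep] with x hx
    by_cases hxG : x ∈ G
    · exact Filter.Eventually.of_forall fun y h => h.1 hxG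
    · have := hx hxG
      rw [ae_iff]
      refine measure_mono_null ?_ this
      intro y hy
      have hy' := not_not.1 hy
      exact ⟨hy'.2.1, Metric.mem_closedBall.2 hy'.2.2⟩
  have hsep2 : ∀ᵐ y ∂μ, ∀ᵐ x ∂μ, ¬ (x ∉ G ∧ (y ∈ G ∧ dist y x ≤ ε)) := by
    refine (Measure.ae_ae_comm (p := fun x y => ¬ (x ∉ G ∧ (y ∈ G ∧ dist y x ≤ ε))) ?_).1 hsep1
    exact ((measurable_fst hGm.compl).inter hNm).compl
  -- apply the kernel hypothesis to the indicator of the complement of G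
  have hw : ∀ᵐ x ∂μ, Gᶜ.indicator (fun _ => (1 : ℝ)) x = 0 := by
    refine hker _ (measurable_const.indicator hGm.compl) ?_ ?_
    · rw [energySq]
      have : ∫⁻ x in S, ∫⁻ y in S, ENNReal.ofReal
          ((Gᶜ.indicator (fun _ => (1 : ℝ)) y - Gᶜ.indicator (fun _ => (1 : ℝ)) x) ^ 2
            * gammaKer n β ε a t x y) = 0 := by
        refine (lintegral_congr_ae ?_).trans lintegral_zero
        filter_upwards [hsep1, hsep2] with x hx1 hx2
        refine (lintegral_congr_ae ?_).trans lintegral_zero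
        filter_upwards [hx1, hx2] with y hy1 hy2
        by_cases hd : dist y x ≤ ε
        · by_cases hx : x ∈ G <;> by_cases hy : y ∈ G
          · simp [hx, hy]
          · exact absurd ⟨hy, hx, by rwa [dist_comm]⟩ hy2
          · exact absurd ⟨hx, hy, hd⟩ hy1
          · simp [hx, hy]
        · have : gammaKer n β ε a t x y = 0 :=
            indicator_of_notMem (fun h => hd (Metric.mem_closedBall.1 h)) _
          simp [this]
      rw [this, mul_zero]
    · filter_upwards [ae_restrict_mem hΩI] with x hx
      have hxG : x ∈ G := Or.inl hx
      simp [hxG]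
  have hGfull : ∀ᵐ x ∂μ, x ∈ G := by
    filter_upwards [hw] with x hx
    by_contra h
    rw [indicator_of_mem (show x ∈ Gᶜ from h)] at hx
    exact one_ne_zero hx
  obtain ⟨C, hC, hCG⟩ := hGgood
  refine ⟨C * K + 1, by simp, by finiteness, fun u hu _ _ h0 => ?_⟩
  calc l2Sq n S u = ∫⁻ x in G, ENNReal.ofReal ((u x) ^ 2) ∂μ := by
        rw [Measure.restrict_eq_self_of_ae_mem hGfull]; rfl
    _ ≤ C * truncD n μ ε u := hCG u hu h0
    _ ≤ C * (K * energySq n S β ε a t u) := by gcongr; exact hKD u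
    _ = C * K * energySq n S β ε a t u := by ring
    _ ≤ _ := by gcongr; exact le_self_add
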